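/- arXiv:1110.1158 — 2 statements merged into one kernel-verified Lean document; each statement's English description precedes it below -/
import Mathlib

section
/- Let X be an aspherical topological space and let h : C(Circle, X) be a free loop, with α ∈ FundamentalGroup X (h 1) the class of the based loop t ↦ h(exp(2πit)). Then the fundamental group of the free loop space at h is isomorphic to the centralizer of α: there is a group isomorphism FundamentalGroup C(Circle, X) h ≃* Subgroup.centralizer {α}. -/
attribute [local instance] Path.Homotopic.setoid

/-- The based loop `t ↦ a (exp (2 π i t))` at `x` associated to a free loop
`a : C(Circle, X)` with `a 1 = x`. -/
noncomputable def basedLoopOf {X : Type*} [TopologicalSpace X] {x : X}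
    (a : C(Circle, X)) (ha : a 1 = x) : Path x x where
  toFun t := a (Circle.exp (2 * Real.pi * t))
  continuous_toFun := by fun_prop
  source' := by simp [ha]
  target' := by simp [ha]

/-- The class in the fundamental group `π₁(X, x)` of the based loop associated to a free
loop `a : C(Circle, X)` with `a 1 = x`. -/
noncomputable def loopClass {X : Type*} [TopologicalSpace X] {x : X}
    (a : C(Circle, X)) (ha : a 1 = x) : FundamentalGroup X x :=
  FundamentalGroup.fromPath (X := TopCat.of X) ⟦basedLoopOf a ha⟧

open unitInterval Topology

namespace FreeLoop

/-- Clamping a real number to the unit interval. -/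
noncomputable def cl (x : ℝ) : I := Set.projIcc 0 1 zero_le_one x

@[fun_prop]
lemma continuous_cl : Continuous cl := continuous_projIcc (h := zero_le_one)

@[simp] lemma cl_coe (t : I) : cl (t : ℝ) = t := Set.projIcc_val _ t

lemma cl_le {x : ℝ} (h : x ≤ 0) : cl x = 0 := Set.projIcc_of_le_left _ h

lemma cl_ge {x : ℝ} (h : 1 ≤ x) : cl x = 1 := Set.projIcc_of_right_le _ h

lemma coe_cl {x : ℝ} (h0 : 0 ≤ x) (h1 : x ≤ 1) : (cl x : ℝ) = x := by
  rw [cl, Set.projIcc_of_mem zero_le_one ⟨h0, h1⟩]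

@[simp] lemma cl_zero : cl 0 = 0 := cl_le le_rfl
@[simp] lemma cl_one : cl 1 = 1 := cl_ge le_rfl

variable {X : Type*} [TopologicalSpace X]

/-- A square gives a commutation relation between its sides. -/
lemma square {a b c d : X} (Φ : C(I × I, X)) (p : Path a b) (q : Path b d) (r : Path a c)
    (w : Path c d) (hp : ∀ s, p s = Φ (s, 0)) (hq : ∀ t, q t = Φ (1, t))
    (hr : ∀ t, r t = Φ (0, t)) (hw : ∀ s, w s = Φ (s, 1)) :
    (p.trans q).Homotopic (r.trans w) := by
  have ha : a = Φ (0, 0) := by rw [← hp, p.source]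
  have hb : b = Φ (1, 0) := by rw [← hp, p.target]
  have hc : c = Φ (0, 1) := by rw [← hr, r.target]
  have hd : d = Φ (1, 1) := by rw [← hw, w.target]
  let Ψ : C(ℝ × ℝ, X) := ⟨fun z => Φ (cl z.1, cl z.2), by fun_prop⟩
  have ha' : a = Ψ (0, 0) := by simp [Ψ, ha]
  have hb' : b = Ψ (1, 0) := by simp [Ψ, hb]
  have hc' : c = Ψ (0, 1) := by simp [Ψ, hc]
  have hd' : d = Ψ (1, 1) := by simp [Ψ, hd]
  clear ha hb hc hd
  subst ha' hb' hc' hd'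
  let p' : Path ((0, 0) : ℝ × ℝ) (1, 0) := ⟨⟨fun s => (s, 0), by fun_prop⟩, by simp, by simp⟩
  let q' : Path ((1, 0) : ℝ × ℝ) (1, 1) := ⟨⟨fun s => (1, s), by fun_prop⟩, by simp, by simp⟩
  let r' : Path ((0, 0) : ℝ × ℝ) (0, 1) := ⟨⟨fun s => (0, s), by fun_prop⟩, by simp, by simp⟩
  let w' : Path ((0, 1) : ℝ × ℝ) (1, 1) := ⟨⟨fun s => (s, 1), by fun_prop⟩, by simp, by simp⟩
  have e1 : p = p'.map Ψ.continuous := by ext s; simp [p', Ψ, hp]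
  have e2 : q = q'.map Ψ.continuous := by ext s; simp [q', Ψ, hq]
  have e3 : r = r'.map Ψ.continuous := by ext s; simp [r', Ψ, hr]
  have e4 : w = w'.map Ψ.continuous := by ext s; simp [w', Ψ, hw]
  rw [e1, e2, e3, e4, ← Path.map_trans, ← Path.map_trans]
  exact (SimplyConnectedSpace.paths_homotopic _ _).map Ψ

/-- The parametrisation of the circle. -/
noncomputable def e (t : I) : Circle := Circle.exp (2 * Real.pi * t)

@[fun_prop]
lemma continuous_e : Continuous e := by unfold e; fun_prop

@[simp] lemma e_zero : e 0 = 1 := by simp [e]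
@[simp] lemma e_one : e 1 = 1 := by simp [e]

lemma e_surj : Function.Surjective e := by
  intro z
  have hpi := Real.pi_pos
  have h1 := Complex.neg_pi_lt_arg (z : ℂ)
  have h2 := Complex.arg_le_pi (z : ℂ)
  by_cases h : 0 ≤ Complex.arg (z : ℂ)
  · refine ⟨⟨Complex.arg (z : ℂ) / (2 * Real.pi), by positivity, ?_⟩, ?_⟩
    · rw [div_le_one (by positivity)]; linarith
    · simp only [e]
      rw [mul_div_cancel₀ _ (by positivity), Circle.exp_arg]
  · refine ⟨⟨(Complex.arg (z : ℂ) + 2 * Real.pi) / (2 * Real.pi), ?_, ?_⟩, ?_⟩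
    · apply div_nonneg <;> linarith
    · rw [div_le_one (by positivity)]; linarith
    · simp only [e]
      rw [mul_div_cancel₀ _ (by positivity), Circle.exp_add, Circle.exp_two_pi, mul_one,
        Circle.exp_arg]

lemma e_eq {s t : I} (h : e s = e t) : s = t ∨ (s = 0 ∧ t = 1) ∨ (s = 1 ∧ t = 0) := by
  obtain ⟨m, hm⟩ := Circle.exp_eq_exp.1 h
  have hpi := Real.pi_pos
  have hm' : (s : ℝ) = t + m := by
    have : 2 * Real.pi * ((s : ℝ) - (t + m)) = 0 := by linear_combination hm
    have := (mul_eq_zero.1 this).resolve_left (by positivity)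
    linarith
  have hs0 := s.2.1
  have hs1 := s.2.2
  have ht0 := t.2.1
  have ht1 := t.2.2
  have h1 : (-1 : ℝ) ≤ m := by linarith
  have h2 : (m : ℝ) ≤ 1 := by linarith
  have h1' : -1 ≤ m := by exact_mod_cast h1
  have h2' : m ≤ 1 := by exact_mod_cast h2
  have : m = -1 ∨ m = 0 ∨ m = 1 := by omega
  rcases this with rfl | rfl | rfl
  · right; left
    push_cast at hm'
    constructor <;> apply Subtype.ext <;> simp only [Set.Icc.coe_zero, Set.Icc.coe_one] <;> linarith
  · left
    apply Subtype.ext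
    simpa using hm'
  · right; right
    push_cast at hm'
    constructor <;> apply Subtype.ext <;> simp only [Set.Icc.coe_zero, Set.Icc.coe_one] <;> linarith

/-- Families of closed paths give families of free loops. -/
lemma descend {Y : Type*} [TopologicalSpace Y] [CompactSpace Y] [T2Space Y] (f : C(Y × I, X))
    (hf : ∀ y, f (y, 0) = f (y, 1)) :
    ∃ g : C(Y, C(Circle, X)), ∀ y t, g y (e t) = f (y, t) := by
  let q : C(Y × I, Y × Circle) := ⟨fun z => (z.1, e z.2), by fun_prop⟩
  have hq : IsQuotientMap q := by
    refine q.continuous.isClosedMap.isQuotientMap q.continuous ?_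
    rintro ⟨y, z⟩
    obtain ⟨t, rfl⟩ := e_surj z
    exact ⟨(y, t), rfl⟩
  have hfac : Function.FactorsThrough f q := by
    rintro ⟨y, s⟩ ⟨y', t⟩ h
    simp only [q, ContinuousMap.coe_mk, Prod.mk.injEq] at h
    obtain ⟨rfl, h⟩ := h
    rcases e_eq h with rfl | ⟨rfl, rfl⟩ | ⟨rfl, rfl⟩
    · rfl
    · exact hf y
    · exact (hf y).symm
  refine ⟨(hq.lift f hfac).curry, fun y t => ?_⟩
  have := congrArg (fun k : C(Y × I, X) => k (y, t)) (hq.lift_comp f hfac)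
  exact this

lemma loop_ext {f g : C(Circle, X)} (h : ∀ t, f (e t) = g (e t)) : f = g := by
  ext z
  obtain ⟨t, rfl⟩ := e_surj z
  exact h t

lemma trans_left {x y z : X} (a : Path x y) (p : Path y z) (t : I) :
    (a.trans p) (cl ((t : ℝ) / 2)) = a t := by
  have h0 := t.2.1
  have h1 := t.2.2
  rw [Path.trans_apply, dif_pos (by rw [coe_cl] <;> linarith)]
  congr 1; apply Subtype.ext; simp only; rw [coe_cl] <;> linarith

lemma trans_right {x y z : X} (a : Path x y) (p : Path y z) (t : I) :
    (a.trans p) (cl ((t : ℝ) / 2 + 1 / 2)) = p t := by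
  have h0 := t.2.1
  have h1 := t.2.2
  by_cases h : (t : ℝ) = 0
  · have : t = 0 := Subtype.ext h
    subst this
    have h2 : cl (((0 : I) : ℝ) / 2 + 1 / 2) = cl (((1 : I) : ℝ) / 2) := by simp
    rw [h2, trans_left, a.target, p.source]
  · have h0' : (0 : ℝ) < t := lt_of_le_of_ne h0 (Ne.symm h)
    rw [Path.trans_apply, dif_neg (by rw [coe_cl] <;> linarith)]
    congr 1; apply Subtype.ext; simp only; rw [coe_cl] <;> linarith

/-- From a commutation relation, a square. -/
lemma unsquare {x : X} (a p : Path x x) (H : (a.trans p).Homotopic (p.trans a)) :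
    ∃ (p' : Path x x) (Φ : C(I × I, X)), p.Homotopic p' ∧ (∀ t, Φ (0, t) = a t) ∧
      (∀ t, Φ (1, t) = a t) ∧ (∀ s, Φ (s, 0) = p' s) ∧ (∀ s, Φ (s, 1) = p' s) := by
  obtain ⟨K⟩ := H
  let Φ : C(I × I, X) := ⟨fun z => K (cl ((1 - z.2) * cl (3 * z.1) + z.2 * cl (3 * z.1 - 2)),
    cl (cl (3 * z.1 - 1) / 2 + z.2 / 2)), by fun_prop⟩
  have c0 : cl (3 * 0 - 1) = 0 := cl_le (by norm_num)
  have c1 : cl (3 * 1 - 1) = 1 := cl_ge (by norm_num)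
  have A1 := trans_left a p
  have A2 := trans_right a p
  have B1 := trans_left p a
  have B2 := trans_right p a
  refine ⟨p.reparam (fun s => cl (3 * s - 1)) (by fun_prop) (by simp [cl_le])
    (by simpa using c1), Φ, ⟨Path.Homotopy.reparam _ _ _ _ _⟩, ?_, ?_, ?_, ?_⟩
  · intro t
    have : Φ (0, t) = K (0, cl ((t : ℝ) / 2)) := by
      simp [Φ, cl_le]
    rw [this, K.apply_zero]
    exact A1 t
  · intro t
    have h3 : cl 3 = 1 := cl_ge (by norm_num)
    have h2 : cl (3 - 1) = 1 := cl_ge (by norm_num)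
    have h1 : cl (3 - 2) = 1 := cl_ge (by norm_num)
    have : Φ (1, t) = K (1, cl ((t : ℝ) / 2 + 1 / 2)) := by
      simp [Φ, h1, h2, h3, add_comm]
    rw [this, K.apply_one]
    exact B2 t
  · intro s
    have e1 : Φ (s, 0) = K (cl (3 * s), cl ((cl (3 * s - 1) : ℝ) / 2)) := by simp [Φ]
    rw [e1]
    change _ = p (cl (3 * s - 1))
    by_cases h : (3 * s : ℝ) ≤ 1
    · rw [cl_le (x := 3 * s - 1) (by linarith)]
      simp
    · rw [cl_ge (x := 3 * s) (by linarith), K.apply_one]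
      exact B1 _
  · intro s
    have e1 : Φ (s, 1) = K (cl (3 * s - 2), cl ((cl (3 * s - 1) : ℝ) / 2 + 1 / 2)) := by simp [Φ]
    rw [e1]
    change _ = p (cl (3 * s - 1))
    by_cases h : (3 * s : ℝ) ≤ 2
    · rw [cl_le (x := 3 * s - 2) (by linarith), K.apply_zero]
      exact A2 _
    · rw [cl_ge (x := 3 * s - 1) (by linarith), cl_ge (x := ((1 : I) : ℝ) / 2 + 1 / 2) (by norm_num)]
      simp

/-- Auxiliary: two maps on the disc agreeing on its boundary, first homotopy. -/
lemma disc_aux (hX : ∀ x : X, Subsingleton (HomotopyGroup (Fin 2) X x))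
    (F G : C(Fin 2 → ℝ, X)) (hFG : ∀ z, ‖z‖ = 1 → F z = G z) :
    ∃ H : C(ℝ × (Fin 2 → ℝ), X), (∀ z, ‖z‖ ≤ 1 → H (0, z) = F z) ∧
      (∀ z, ‖z‖ ≤ 1 → H (1, z) = G ((max (2 * ‖z‖ - 1) 0 / max ‖z‖ (1 / 2)) • z)) ∧
      (∀ u z, 0 ≤ u → ‖z‖ = 1 → H (u, z) = F z) := by
  classical
  let M : (Fin 2 → ℝ) → X := fun w => if ‖w‖ ≤ 1 / 2 then F ((2 : ℝ) • w) else
    G ((max (2 - 2 * ‖w‖) 0 / max ‖w‖ (1 / 2)) • w)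
  have hpos : ∀ r : ℝ, max r (1 / 2) ≠ 0 := fun r =>
    (lt_of_lt_of_le (by norm_num) (le_max_right r (1 / 2))).ne'
  have hpos4 : ∀ r : ℝ, max r (1 / 4) ≠ 0 := fun r =>
    (lt_of_lt_of_le (by norm_num) (le_max_right r (1 / 4))).ne'
  have hM : Continuous M := by
    refine Continuous.if_le (by fun_prop) ?_ continuous_norm continuous_const ?_
    · have hd : Continuous (fun w : Fin 2 → ℝ => max (2 - 2 * ‖w‖) 0 / max ‖w‖ (1 / 2)) :=
        Continuous.div (by fun_prop) (by fun_prop) (fun w => hpos _)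
      fun_prop
    · intro w hw
      have h1 : ‖(2 : ℝ) • w‖ = 1 := by rw [norm_smul, hw]; norm_num
      rw [hFG _ h1, hw]
      norm_num
  have hM1 : ∀ w, 1 ≤ ‖w‖ → M w = G 0 := by
    intro w hw
    simp only [M]
    rw [if_neg (by linarith), max_eq_right (by linarith)]
    simp
  let Mc : C(Fin 2 → I, X) := ⟨fun y => M (fun i => 2 * (y i : ℝ) - 1), by fun_prop⟩
  have hMc : ∀ y ∈ Cube.boundary (Fin 2), Mc y = G 0 := by
    rintro y ⟨i, hi⟩
    apply hM1
    refine le_trans ?_ (norm_le_pi_norm (fun i => 2 * (y i : ℝ) - 1) i)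
    rcases hi with hi | hi <;> simp [hi] <;> norm_num
  have hS := hX (G 0)
  obtain ⟨K⟩ : GenLoop.Homotopic (⟨Mc, hMc⟩ : GenLoop (Fin 2) X (G 0)) GenLoop.const :=
    Quotient.exact (hS.elim (Quotient.mk (GenLoop.Homotopic.setoid _ _) _)
      (Quotient.mk (GenLoop.Homotopic.setoid _ _) _))
  let k : C(ℝ × (Fin 2 → ℝ), X) := ⟨fun z => K (cl z.1, fun i => cl ((z.2 i + 1) / 2)), by fun_prop⟩
  have k0 : ∀ u w, u ≤ 0 → ‖w‖ ≤ 1 → k (u, w) = M w := by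
    intro u w hu hw
    simp only [k, ContinuousMap.coe_mk]
    rw [cl_le hu, K.apply_zero]
    change M _ = M w
    congr 1
    ext i
    have := (norm_le_pi_norm w i).trans hw
    rw [Real.norm_eq_abs, abs_le] at this
    rw [coe_cl] <;> linarith
  have k1 : ∀ u w, 1 ≤ u → k (u, w) = G 0 := by
    intro u w hu
    simp only [k, ContinuousMap.coe_mk]
    rw [cl_ge hu, K.apply_one]
    rfl
  have kb : ∀ u w, 1 ≤ ‖w‖ → k (u, w) = G 0 := by
    intro u w hw
    have hi : ∃ i, 1 ≤ |w i| := by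
      by_contra! hcon
      exact absurd ((pi_norm_lt_iff one_pos).2 hcon) (not_lt.2 hw)
    have hb : (fun i => cl ((w i + 1) / 2)) ∈ Cube.boundary (Fin 2) := by
      obtain ⟨i, hi⟩ := hi
      refine ⟨i, ?_⟩
      rcases le_abs.1 hi with h | h
      · right; exact cl_ge (by linarith)
      · left; exact cl_le (by linarith)
    simp only [k, ContinuousMap.coe_mk]
    rw [K.eq_fst _ hb]
    exact hMc _ hb
  let c : ℝ → ℝ := fun r => min 1 (3 / 2 - r) / max r (1 / 4)
  have hc : Continuous c := by
    refine Continuous.div ?_ ?_ ?_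
    · fun_prop
    · fun_prop
    · intro w; exact hpos4 _
  refine ⟨⟨fun z => k (z.1 * (2 - 4 * ‖z.2‖),
    (1 - z.1) • ((1 / 2 : ℝ) • z.2) + z.1 • (c ‖z.2‖ • z.2)), by fun_prop⟩, ?_, ?_, ?_⟩
  · intro z hz
    have hn : ‖(1 / 2 : ℝ) • z‖ = ‖z‖ / 2 := by
      rw [norm_smul, Real.norm_of_nonneg (by norm_num)]; ring
    have : M ((1 / 2 : ℝ) • z) = F z := by
      simp only [M]
      rw [if_pos (by rw [hn]; linarith), smul_smul]
      norm_num
    simp only [ContinuousMap.coe_mk, zero_mul, sub_zero, one_smul, zero_smul, add_zero]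
    rw [k0 _ _ le_rfl (by rw [hn]; linarith), this]
  · intro z hz
    simp only [ContinuousMap.coe_mk, one_mul, sub_self, zero_smul, one_smul, zero_add]
    have hz0 := norm_nonneg z
    rcases le_total ‖z‖ (1 / 4) with h4 | h4
    · rw [k1 _ _ (by linarith), max_eq_right (by linarith)]
      simp
    rcases le_total ‖z‖ (1 / 2) with h2 | h2
    · have hw : ‖c ‖z‖ • z‖ = 1 := by
        simp only [c]
        rw [min_eq_left (by linarith), max_eq_left h4, norm_smul, norm_div, norm_norm, norm_one]
        field_simp
      rw [kb _ _ hw.ge, max_eq_right (by linarith)]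
      simp
    · have hcz : c ‖z‖ = (3 / 2 - ‖z‖) / ‖z‖ := by
        simp only [c]
        rw [min_eq_right (by linarith), max_eq_left h4]
      have hw : ‖c ‖z‖ • z‖ = 3 / 2 - ‖z‖ := by
        rw [hcz, norm_smul, norm_div, norm_norm, Real.norm_of_nonneg (by linarith)]
        field_simp
      rw [k0 _ _ (by linarith) (by rw [hw]; linarith)]
      simp only [M]
      rw [hw, max_eq_left (by linarith : (0 : ℝ) ≤ 2 * ‖z‖ - 1), max_eq_left h2,
        max_eq_left (by linarith : (0 : ℝ) ≤ 2 - 2 * (3 / 2 - ‖z‖)),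
        max_eq_left (by linarith : (1 / 2 : ℝ) ≤ 3 / 2 - ‖z‖), hcz]
      split_ifs with h
      · have h1 : ‖z‖ = 1 := by linarith
        rw [h1, smul_smul]
        norm_num
        exact hFG z h1
      · rw [smul_smul]
        congr 2
        have : 3 / 2 - ‖z‖ ≠ 0 := by linarith
        rw [div_mul_div_cancel₀ this]
        ring
  · intro u z hu hz
    have hc1 : c ‖z‖ = 1 / 2 := by
      simp only [c]; rw [hz]; norm_num
    have hn : ‖(1 / 2 : ℝ) • z‖ = 1 / 2 := by
      rw [norm_smul, hz, Real.norm_of_nonneg (by norm_num)]; ring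
    simp only [ContinuousMap.coe_mk]
    rw [hc1, ← add_smul, sub_add_cancel, one_smul, k0 _ _ (by rw [hz]; linarith) (by rw [hn]; norm_num)]
    simp only [M]
    rw [if_pos hn.le, smul_smul]
    norm_num

/-- The boundary of the square. -/
def bd : Set (I × I) := {z | z.1 = 0 ∨ z.1 = 1 ∨ z.2 = 0 ∨ z.2 = 1}

/-- Two maps on the square agreeing on its boundary are homotopic relative to the boundary. -/
lemma square_rel (hX : ∀ x : X, Subsingleton (HomotopyGroup (Fin 2) X x))
    (f g : C(I × I, X)) (hfg : ∀ z ∈ bd, f z = g z) : f.HomotopicRel g bd := by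
  let ext : C(I × I, X) → C(Fin 2 → ℝ, X) := fun f =>
    ⟨fun z => f (cl ((z 0 + 1) / 2), cl ((z 1 + 1) / 2)), by fun_prop⟩
  let v : I × I → (Fin 2 → ℝ) := fun z => ![2 * z.1 - 1, 2 * z.2 - 1]
  have hv : Continuous v := by
    refine continuous_pi fun i => ?_
    fin_cases i
    · change Continuous (fun z : I × I => 2 * (z.1 : ℝ) - 1); fun_prop
    · change Continuous (fun z : I × I => 2 * (z.2 : ℝ) - 1); fun_prop
  have hext : ∀ f z, ext f (v z) = f z := by
    intro f z
    simp [ext, v]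
  have hv1 : ∀ z, ‖v z‖ ≤ 1 := by
    intro z
    rw [pi_norm_le_iff_of_nonneg zero_le_one]
    have h1 := z.1.2.1
    have h2 := z.1.2.2
    have h3 := z.2.2.1
    have h4 := z.2.2.2
    intro i
    rw [Real.norm_eq_abs, abs_le]
    fin_cases i <;> simp [v] <;> constructor <;> linarith
  have hvb : ∀ z ∈ bd, ‖v z‖ = 1 := by
    intro z hz
    refine le_antisymm (hv1 z) ?_
    rcases hz with h | h | h | h
    · refine le_trans ?_ (norm_le_pi_norm (v z) 0); simp [v, h]
    · refine le_trans ?_ (norm_le_pi_norm (v z) 0); simp [v, h]; norm_num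
    · refine le_trans ?_ (norm_le_pi_norm (v z) 1); simp [v, h]
    · refine le_trans ?_ (norm_le_pi_norm (v z) 1); simp [v, h]; norm_num
  have hagree : ∀ z, ‖z‖ = 1 → ext f z = ext g z := by
    intro z hz
    have hi : ∃ i, 1 ≤ |z i| := by
      by_contra! hcon
      exact absurd ((pi_norm_lt_iff one_pos).2 hcon) (not_lt.2 hz.ge)
    apply hfg
    obtain ⟨i, hi⟩ := hi
    fin_cases i
    · rcases le_abs.1 hi with h | h
      · right; left; exact cl_ge (by simp at h; linarith)
      · left; exact cl_le (by simp at h; linarith)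
    · rcases le_abs.1 hi with h | h
      · right; right; right; exact cl_ge (by simp at h; linarith)
      · right; right; left; exact cl_le (by simp at h; linarith)
  obtain ⟨H, H0, H1, Hb⟩ := disc_aux hX (ext f) (ext g) hagree
  let ρ : (Fin 2 → ℝ) → (Fin 2 → ℝ) :=
    fun z => (max (2 * ‖z‖ - 1) 0 / max ‖z‖ (1 / 2)) • z
  have hρ : Continuous ρ := by
    have hd : Continuous (fun w : Fin 2 → ℝ => max (2 * ‖w‖ - 1) 0 / max ‖w‖ (1 / 2)) :=
      Continuous.div (by fun_prop) (by fun_prop)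
        (fun w => (lt_of_lt_of_le (by norm_num) (le_max_right ‖w‖ (1 / 2))).ne')
    exact hd.smul continuous_id
  have hρ1 : ∀ z, ‖z‖ = 1 → ρ z = z := by
    intro z hz
    simp only [ρ]
    rw [hz]; norm_num
  let m : C(I × I, X) := ⟨fun z => ext g (ρ (v z)), by fun_prop⟩
  have P1 : f.HomotopicRel m bd := by
    refine ⟨⟨⟨⟨fun z => H (z.1, v z.2), by fun_prop⟩, ?_, ?_⟩, ?_⟩⟩
    · intro z
      simp only [Set.Icc.coe_zero]
      rw [H0 _ (hv1 z), hext]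
    · intro z
      simp only [Set.Icc.coe_one]
      rw [H1 _ (hv1 z)]
      rfl
    · intro u z hz
      simp only [ContinuousMap.coe_mk]
      rw [Hb _ _ u.2.1 (hvb z hz), hext]
  have P2 : m.HomotopicRel g bd := by
    refine ⟨⟨⟨⟨fun z => ext g ((1 - (z.1 : ℝ)) • ρ (v z.2) + (z.1 : ℝ) • v z.2), by fun_prop⟩,
      ?_, ?_⟩, ?_⟩⟩
    · intro z
      simp [m]
    · intro z
      simp [hext]
    · intro u z hz
      simp only [ContinuousMap.coe_mk, m]
      rw [hρ1 _ (hvb z hz), ← add_smul, sub_add_cancel, one_smul]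
  exact P1.trans P2

/-- Evaluation at the base point of the circle. -/
noncomputable def ev : C(C(Circle, X), X) := ⟨fun f => f 1, by fun_prop⟩

/-- The square associated to a path of free loops. -/
noncomputable def sq {f g : C(Circle, X)} (γ : Path f g) : C(I × I, X) :=
  ⟨fun z => γ z.1 (e z.2), by fun_prop⟩

lemma comm_of_loop (h : C(Circle, X)) (γ : Path h h) :
    ((basedLoopOf h rfl).trans (γ.map ev.continuous)).Homotopic
      (Path.trans (γ.map ev.continuous) (basedLoopOf h rfl)) := by
  refine (square (sq γ) (γ.map ev.continuous) (basedLoopOf h rfl) (basedLoopOf h rfl)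
    (γ.map ev.continuous) ?_ ?_ ?_ ?_).symm
  · intro s; simp [sq]; rfl
  · intro s; simp [sq]; rfl
  · intro s; simp [sq]; rfl
  · intro s; simp [sq]; rfl

lemma exists_loop (h : C(Circle, X)) (p : Path (h 1) (h 1))
    (H : ((basedLoopOf h rfl).trans p).Homotopic (p.trans (basedLoopOf h rfl))) :
    ∃ γ : Path h h, p.Homotopic (γ.map ev.continuous) := by
  obtain ⟨p', Φ, hp, h0, h1, h2, h3⟩ := unsquare _ _ H
  obtain ⟨g, hg⟩ := descend Φ (fun s => by rw [h2, h3])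
  have h0' : g 0 = h := by
    apply loop_ext; intro t; exact (hg 0 t).trans (h0 t)
  have h1' : g 1 = h := by
    apply loop_ext; intro t; exact (hg 1 t).trans (h1 t)
  refine ⟨⟨g, h0', h1'⟩, ?_⟩
  · refine hp.trans ?_
    have hE : p' = Path.map (X := C(Circle, X)) (Y := X) ⟨g, h0', h1'⟩ ev.continuous := by
      apply Path.ext
      funext s
      have := (hg s 0).trans (h2 s)
      rw [e_zero] at this
      exact this.symm
    rw [hE]
    exact Path.Homotopic.refl _

lemma null_of_const (hX : ∀ x : X, Subsingleton (HomotopyGroup (Fin 2) X x))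
    (h : C(Circle, X)) (γ : Path h h) (hγ : ∀ s, γ s 1 = h 1) : γ.Homotopic (Path.refl h) := by
  obtain ⟨K⟩ := square_rel hX (sq γ) (sq (Path.refl h)) (by
    rintro ⟨s, t⟩ hz
    simp only [bd, Set.mem_ofPred_eq] at hz
    rcases hz with rfl | rfl | rfl | rfl <;> simp [sq, hγ])
  let f : C((I × I) × I, X) := ⟨fun z => K (z.1.1, (z.1.2, z.2)), by fun_prop⟩
  have hb : ∀ u z, z ∈ bd → K (u, z) = sq γ z := fun u z hz => K.eq_fst u hz
  obtain ⟨g, hg⟩ := descend f (by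
    rintro ⟨u, s⟩
    simp only [f, ContinuousMap.coe_mk]
    rw [hb _ _ (by simp [bd]), hb _ _ (by simp [bd])]
    simp [sq])
  refine ⟨⟨⟨g, ?_, ?_⟩, ?_⟩⟩
  · intro s; apply loop_ext; intro t
    exact (hg _ t).trans (K.apply_zero _)
  · intro s; apply loop_ext; intro t
    exact (hg _ t).trans (K.apply_one _)
  · intro u s hs; apply loop_ext; intro t
    refine (hg _ t).trans (hb _ _ ?_)
    rcases hs with rfl | hs
    · simp [bd]
    · rw [Set.mem_singleton_iff] at hs; subst hs; simp [bd]

lemma null_of_null (hX : ∀ x : X, Subsingleton (HomotopyGroup (Fin 2) X x))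
    (h : C(Circle, X)) (γ : Path h h)
    (H : (γ.map ev.continuous).Homotopic (Path.refl (ev h))) : γ.Homotopic (Path.refl h) := by
  obtain ⟨N⟩ := H
  have N0 : ∀ s, N (0, s) = γ s 1 := fun s => N.apply_zero s
  have N1 : ∀ s, N (1, s) = h 1 := fun s => N.apply_one s
  have Ns : ∀ u, N (u, 0) = h 1 := fun u => Path.Homotopy.source N u
  have Nt : ∀ u, N (u, 1) = h 1 := fun u => Path.Homotopy.target N u
  -- the extended square
  let T : I × ℝ → X := fun z => if z.2 ≤ 0 then N (cl (-z.2), z.1) else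
    if z.2 ≤ 1 then γ z.1 (e (cl z.2)) else N (cl (z.2 - 1), z.1)
  have hT : Continuous T := by
    refine Continuous.if_le (by fun_prop) (Continuous.if_le (by fun_prop) (by fun_prop)
      continuous_snd continuous_const ?_) continuous_snd continuous_const ?_
    · intro z hz; simp [hz, N0]
    · intro z hz; simp [hz, N0]
  have Tle : ∀ s t, t ≤ 0 → T (s, t) = N (cl (-t), s) := fun s t ht => by simp [T, ht]
  have Tmid : ∀ s (t : I), T (s, t) = γ s (e t) := fun s t => by
    have h0 := t.2.1
    have h1 := t.2.2
    by_cases ht : (t : ℝ) = 0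
    · have : t = 0 := Subtype.ext ht
      subst this
      rw [Tle _ _ (by simp)]; simp [N0]
    · have h0' : ¬ (t : ℝ) ≤ 0 := fun hh => ht (le_antisymm hh h0)
      simp only [T]
      rw [if_neg h0', if_pos h1, cl_coe]
  have Tge : ∀ s t, 1 ≤ t → T (s, t) = N (cl (t - 1), s) := fun s t ht => by
    rcases ht.eq_or_lt with rfl | ht
    · have := Tmid s 1
      simp only [Set.Icc.coe_one] at this
      rw [this]; simp [N0]
    · simp only [T]
      rw [if_neg (by linarith), if_neg (by linarith)]
  have Tends : ∀ t, T (0, t) = T (1, t) := by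
    intro t
    rcases le_total t 0 with h0 | h0
    · rw [Tle _ _ h0, Tle _ _ h0, Ns, Nt]
    rcases le_total t 1 with h1 | h1
    · have a := Tmid 0 ⟨t, h0, h1⟩
      have b := Tmid 1 ⟨t, h0, h1⟩
      simp only at a b
      rw [a, b]; simp
    · rw [Tge _ _ h1, Tge _ _ h1, Ns, Nt]
  let f : C((I × I) × I, X) :=
    ⟨fun z => T (z.1.1, -(z.1.2 : ℝ) + (1 + 2 * (z.1.2 : ℝ)) * (z.2 : ℝ)), by fun_prop⟩
  have f0 : ∀ s u, f ((s, u), 0) = N (u, s) := by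
    intro s u
    have : f ((s, u), 0) = T (s, -(u : ℝ)) := by simp [f]
    rw [this, Tle _ _ (by have := u.2.1; linarith), neg_neg, cl_coe]
  have f1 : ∀ s u, f ((s, u), 1) = N (u, s) := by
    intro s u
    have : f ((s, u), 1) = T (s, 1 + (u : ℝ)) := by simp [f]; congr 2; ring
    rw [this, Tge _ _ (by have := u.2.1; linarith), add_sub_cancel_left, cl_coe]
  obtain ⟨g, hg⟩ := descend f (by rintro ⟨s, u⟩; rw [f0, f1])
  have g0 : ∀ s, g (s, 0) = γ s := by
    intro s; apply loop_ext; intro t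
    rw [hg, ← Tmid]; simp [f]
  have gends : ∀ u, g (0, u) = g (1, u) := by
    intro u; apply loop_ext; intro t
    rw [hg, hg]; exact Tends _
  let δ : Path h (g (0, 1)) := ⟨⟨fun u => g (0, u), by fun_prop⟩, by simp [g0], rfl⟩
  let γ' : Path (g (0, 1)) (g (0, 1)) :=
    ⟨⟨fun s => g (s, 1), by fun_prop⟩, rfl, by simp [gends]⟩
  have hsq : (γ.trans δ).Homotopic (δ.trans γ') := by
    refine square g _ _ _ _ ?_ ?_ ?_ ?_
    · intro s; exact (g0 s).symm
    · intro u; exact gends u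
    · intro u; rfl
    · intro s; rfl
  have hγ' : γ'.Homotopic (Path.refl _) := by
    apply null_of_const hX
    intro s
    have a : ∀ s, g (s, 1) 1 = h 1 := by
      intro s
      have := hg (s, 1) 0
      rw [e_zero] at this
      rw [this, f0, N1]
    exact (a s).trans (a 0).symm
  rw [← Path.Homotopic.Quotient.eq] at hsq hγ' ⊢
  rw [Path.Homotopic.Quotient.mk_trans, Path.Homotopic.Quotient.mk_trans, hγ'] at hsq
  have := congrArg (fun w => Path.Homotopic.Quotient.trans w (Path.Homotopic.Quotient.mk δ).symm) hsq
  simpa [Path.Homotopic.Quotient.trans_assoc] using this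

end FreeLoop

/-- If `X` is aspherical (all homotopy groups `π_n` for `n ≥ 2` are trivial), then the
fundamental group of the free loop space `C(Circle, X)` at a free loop `h` is isomorphic
to the centralizer in `π₁(X, h 1)` of the class `α` of the based loop
`t ↦ h (exp (2 π i t))`. -/
theorem fundamentalGroup_freeLoopSpace_iso_centralizer {X : Type*} [TopologicalSpace X]
    (hX : ∀ n : ℕ, 2 ≤ n → ∀ x : X, Subsingleton (HomotopyGroup (Fin n) X x))
    (h : C(Circle, X)) (α : FundamentalGroup X (h 1)) (hα : α = loopClass h rfl) :
    Nonempty (FundamentalGroup C(Circle, X) h ≃*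
      Subgroup.centralizer ({α} : Set (FundamentalGroup X (h 1)))) := by
  let φ : FundamentalGroup C(Circle, X) h →* FundamentalGroup X (h 1) :=
    FundamentalGroup.map FreeLoop.ev h
  have hφ : ∀ γ : Path h h, φ (Path.Homotopic.Quotient.mk γ) =
      Path.Homotopic.Quotient.mk (γ.map FreeLoop.ev.continuous) := fun γ => rfl
  have hα' : α = Path.Homotopic.Quotient.mk (basedLoopOf h rfl) := hα
  have hinj : Function.Injective φ := by
    rw [injective_iff_map_eq_one]
    intro a ha
    obtain ⟨γ, rfl⟩ := Path.Homotopic.Quotient.mk_surjective a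
    rw [hφ] at ha
    exact Path.Homotopic.Quotient.eq.2
      (FreeLoop.null_of_null (hX 2 le_rfl) h γ (Path.Homotopic.Quotient.exact ha))
  have hrange : φ.range = Subgroup.centralizer {α} := by
    ext b
    rw [Subgroup.mem_centralizer_singleton_iff]
    constructor
    · rintro ⟨a, rfl⟩
      obtain ⟨γ, rfl⟩ := Path.Homotopic.Quotient.mk_surjective a
      rw [hφ, hα']
      exact Path.Homotopic.Quotient.eq.2 (FreeLoop.comm_of_loop h γ)
    · intro hb
      obtain ⟨p, rfl⟩ := Path.Homotopic.Quotient.mk_surjective b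
      rw [hα'] at hb
      obtain ⟨γ, hγ⟩ := FreeLoop.exists_loop h p (Path.Homotopic.Quotient.exact hb)
      exact ⟨Path.Homotopic.Quotient.mk γ, Path.Homotopic.Quotient.eq.2 hγ.symm⟩
  exact ⟨(MonoidHom.ofInjective hinj).trans (MulEquiv.subgroupCongr hrange)⟩
end

section
/- The free loop space of an aspherical space is aspherical: if X is an aspherical topological space, then for every h : C(Circle, X) and every n ≥ 2, the homotopy group HomotopyGroup n C(Circle, X) h is trivial (a subsingleton). -/
namespace FreeLoopAux
open scoped unitInterval Topology

noncomputable def sc (r : ℝ) : ℝ := min 1 (3 - 3 * r) / max r (1/3)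
noncomputable def ht (r : ℝ) : ℝ := max (-1) (min 1 (3 - 6 * r))

/-- Collapse of the ball onto the sphere one dimension up. -/
noncomputable def gm {m : ℕ} (u : Fin m → ℝ) : ℝ × (Fin m → ℝ) := (ht ‖u‖, sc ‖u‖ • u)

lemma continuous_gm {m : ℕ} : Continuous (gm (m := m)) := by
  unfold gm ht sc
  have : ∀ u : Fin m → ℝ, max ‖u‖ (1/3) ≠ 0 := fun u =>
    (lt_of_lt_of_le (by norm_num) (le_max_right _ _)).ne'
  fun_prop (disch := assumption)

lemma sc_pos {r : ℝ} (h : r < 1) : 0 < sc r := by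
  unfold sc
  have : (0:ℝ) < max r (1/3) := lt_of_lt_of_le (by norm_num) (le_max_right _ _)
  have : 0 < min 1 (3 - 3 * r) := lt_min one_pos (by linarith)
  positivity

lemma sc_nonneg {r : ℝ} (h : r ≤ 1) : 0 ≤ sc r := by
  unfold sc
  have : (0:ℝ) < max r (1/3) := lt_of_lt_of_le (by norm_num) (le_max_right _ _)
  have : 0 ≤ min 1 (3 - 3 * r) := le_min zero_le_one (by linarith)
  positivity

lemma cases_r {r : ℝ} (_ : 0 ≤ r) (_ : r ≤ 1) :
    (r ≤ 1/3 ∧ ht r = 1 ∧ sc r = 3 ∧ sc r * r = 3 * r) ∨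
    (1/3 ≤ r ∧ r ≤ 2/3 ∧ ht r = 3 - 6 * r ∧ sc r = 1 / r ∧ sc r * r = 1) ∨
    (2/3 ≤ r ∧ ht r = -1 ∧ sc r = (3 - 3 * r) / r ∧ sc r * r = 3 - 3 * r) := by
  rcases le_total r (1/3) with h1 | h1
  · left
    have e : sc r = 3 := by
      unfold sc
      rw [max_eq_right h1, min_eq_left (by linarith)]; norm_num
    refine ⟨h1, ?_, e, by rw [e]⟩
    unfold ht; rw [min_eq_left (by linarith), max_eq_right (by norm_num)]
  · right
    have hr : r ≠ 0 := by linarith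
    rcases le_total r (2/3) with h2 | h2
    · left
      have e : sc r = 1 / r := by
        unfold sc
        rw [max_eq_left h1, min_eq_left (by linarith)]
      refine ⟨h1, h2, ?_, e, by rw [e]; field_simp⟩
      unfold ht; rw [min_eq_right (by linarith), max_eq_right (by linarith)]
    · right
      have e : sc r = (3 - 3 * r) / r := by
        unfold sc
        rw [max_eq_left h1, min_eq_right (by linarith)]
      refine ⟨h2, ?_, e, by rw [e]; field_simp⟩
      unfold ht; rw [min_eq_right (by linarith), max_eq_left (by linarith)]

lemma norm_snd {m : ℕ} {u : Fin m → ℝ} (hu : ‖u‖ ≤ 1) : ‖sc ‖u‖ • u‖ = sc ‖u‖ * ‖u‖ := by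
  rw [norm_smul, Real.norm_of_nonneg (sc_nonneg hu)]

lemma norm_gm {m : ℕ} {u : Fin m → ℝ} (hu : ‖u‖ ≤ 1) : ‖gm u‖ = 1 := by
  rw [Prod.norm_def]
  simp only [gm]
  rw [norm_snd hu, Real.norm_eq_abs]
  have h0 := norm_nonneg u
  rcases cases_r h0 hu with ⟨a, b, c, d⟩ | ⟨a, a', b, c, d⟩ | ⟨a, b, c, d⟩ <;> rw [b, d]
  · rw [abs_one, max_eq_left]; linarith
  · rw [max_eq_right]; rw [abs_le]; constructor <;> linarith
  · rw [abs_neg, abs_one, max_eq_left]; linarith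

lemma gm_inj {m : ℕ} {u v : Fin m → ℝ} (hu : ‖u‖ ≤ 1) (hv : ‖v‖ ≤ 1) (h : gm u = gm v) :
    u = v ∨ (‖u‖ = 1 ∧ ‖v‖ = 1) := by
  have h1 : ht ‖u‖ = ht ‖v‖ := congrArg Prod.fst h
  have h2 : sc ‖u‖ • u = sc ‖v‖ • v := congrArg Prod.snd h
  have h3 : sc ‖u‖ * ‖u‖ = sc ‖v‖ * ‖v‖ := by
    rw [← norm_snd hu, ← norm_snd hv, h2]
  have h4 : ‖u‖ = ‖v‖ := by
    have h0 := norm_nonneg u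
    have h0' := norm_nonneg v
    rcases cases_r h0 hu with ⟨a, b, c, d⟩ | ⟨a, a', b, c, d⟩ | ⟨a, b, c, d⟩ <;>
    rcases cases_r h0' hv with ⟨e, f, g, i⟩ | ⟨e, e', f, g, i⟩ | ⟨e, f, g, i⟩ <;>
    rw [b, f] at h1 <;> rw [d, i] at h3 <;> linarith
  rcases hu.lt_or_eq with h5 | h5
  · left
    rw [← h4] at h2
    exact smul_right_injective _ (sc_pos h5).ne' h2
  · right; exact ⟨h5, h4 ▸ h5⟩

lemma gm_one {m : ℕ} {u : Fin m → ℝ} (hu : ‖u‖ = 1) : gm u = (-1, 0) := by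
  simp [gm, hu, ht, sc]
  norm_num

lemma gm_surj {m : ℕ} (hm : 0 < m) {p : ℝ × (Fin m → ℝ)} (hp : ‖p‖ = 1) :
    ∃ u : Fin m → ℝ, ‖u‖ ≤ 1 ∧ gm u = p := by
  have : Nonempty (Fin m) := ⟨⟨0, hm⟩⟩
  obtain ⟨a, v⟩ := p
  rw [Prod.norm_def] at hp
  simp only [Real.norm_eq_abs] at hp
  have ha : |a| ≤ 1 := hp ▸ le_max_left _ _
  have hv : ‖v‖ ≤ 1 := hp ▸ le_max_right _ _
  have ha' := abs_le.1 ha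
  have hv0 := norm_nonneg v
  by_cases h1 : ‖v‖ = 1
  · have hn : ‖((3 - a) / 6) • v‖ = (3 - a) / 6 := by
      rw [norm_smul, h1, mul_one, Real.norm_of_nonneg]; linarith
    refine ⟨((3 - a) / 6) • v, by rw [hn]; linarith, ?_⟩
    unfold gm
    rw [hn]
    have hne : 3 - a ≠ 0 := by linarith
    rcases cases_r (r := (3 - a)/6) (by linarith) (by linarith) with ⟨q, b, c, d⟩ | ⟨q, q', b, c, d⟩ | ⟨q, b, c, d⟩ <;> rw [smul_smul, b, d]
    · ext <;> simp
      · linarith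
      · rw [show a = 1 by linarith]; ring
    · ext <;> simp
      · linarith
    · ext <;> simp
      · linarith
      · rw [show a = (-1) by linarith]; ring
  · have h2 : |a| = 1 := by
      rcases max_choice |a| ‖v‖ with h | h
      · rw [← h, hp]
      · rw [h] at hp; exact absurd hp h1
    have hv1 : ‖v‖ < 1 := lt_of_le_of_ne hv h1
    rcases (abs_eq zero_le_one).1 h2 with rfl | rfl
    · have hn : ‖(1/3 : ℝ) • v‖ = 1/3 * ‖v‖ := by
        rw [norm_smul, Real.norm_of_nonneg (by norm_num)]
      refine ⟨(1/3 : ℝ) • v, by rw [hn]; linarith, ?_⟩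
      unfold gm
      rw [hn]
      rcases cases_r (r := 1/3 * ‖v‖) (by linarith) (by linarith) with ⟨q, b, c, d⟩ | ⟨q, q', b, c, d⟩ | ⟨q, b, c, d⟩
      · rw [smul_smul, b, c]; ext <;> simp
      · exfalso; linarith
      · exfalso; linarith
    · by_cases h3 : v = 0
      · subst h3
        refine ⟨fun _ => 1, ?_, gm_one ?_⟩ <;> simp
      · have hpos : 0 < ‖v‖ := norm_pos_iff.2 h3
        have hn : ‖((1 - ‖v‖/3) / ‖v‖) • v‖ = 1 - ‖v‖/3 := by
          rw [norm_smul, Real.norm_of_nonneg (div_nonneg (by linarith) hv0)]; field_simp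
        refine ⟨((1 - ‖v‖/3) / ‖v‖) • v, by rw [hn]; linarith, ?_⟩
        unfold gm
        rw [hn]
        rcases cases_r (r := 1 - ‖v‖/3) (by linarith) (by linarith) with ⟨q, b, c, d⟩ | ⟨q, q', b, c, d⟩ | ⟨q, b, c, d⟩
        · exfalso; linarith
        · exfalso; linarith
        · have : sc (1 - ‖v‖/3) * ((1 - ‖v‖/3) / ‖v‖) = 1 := by
            rw [← mul_div_assoc, d]; field_simp; ring
          rw [smul_smul, b, this, one_smul]

/-- Affine coordinates of the cube. -/
noncomputable def uc {m : ℕ} (y : Fin m → I) : Fin m → ℝ := fun i => 2 * (y i : ℝ) - 1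

lemma continuous_uc {m : ℕ} : Continuous (uc (m := m)) := by unfold uc; fun_prop

lemma uc_inj {m : ℕ} {y z : Fin m → I} (h : uc y = uc z) : y = z := by
  ext i
  have := congrFun h i
  simp only [uc] at this
  linarith

lemma norm_uc_le {m : ℕ} (y : Fin m → I) : ‖uc y‖ ≤ 1 := by
  rw [pi_norm_le_iff_of_nonneg zero_le_one]
  intro i
  rw [Real.norm_eq_abs, abs_le]
  have := (y i).2.1
  have := (y i).2.2
  constructor <;> simp only [uc] <;> linarith

lemma abs_coord {t : I} : |2 * (t : ℝ) - 1| = 1 ↔ t = 0 ∨ t = 1 := by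
  rw [abs_eq zero_le_one]
  constructor
  · rintro (h | h)
    · right; exact Subtype.ext (show (t : ℝ) = 1 by linarith)
    · left; exact Subtype.ext (show (t : ℝ) = 0 by linarith)
  · rintro (h | h)
    · right; rw [h]; simp
    · left; rw [h]; norm_num

lemma norm_uc_eq {m : ℕ} (y : Fin m → I) (h : ‖uc y‖ = 1) : y ∈ Cube.boundary (Fin m) := by
  by_contra hc
  have : ‖uc y‖ < 1 := by
    rw [pi_norm_lt_iff one_pos]
    intro i
    refine lt_of_le_of_ne ((norm_le_pi_norm _ i).trans (norm_uc_le y)) fun hi => hc ⟨i, ?_⟩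
    exact abs_coord.1 hi
  linarith

lemma norm_uc_bd {m : ℕ} (y : Fin m → I) (h : y ∈ Cube.boundary (Fin m)) : ‖uc y‖ = 1 := by
  obtain ⟨i, hi⟩ := h
  refine le_antisymm (norm_uc_le y) ?_
  rw [← abs_coord.2 hi]
  exact norm_le_pi_norm (uc y) i

lemma uc_surj {m : ℕ} {v : Fin m → ℝ} (hv : ‖v‖ ≤ 1) : ∃ y, uc y = v := by
  have h : ∀ i, |v i| ≤ 1 := fun i => (norm_le_pi_norm v i).trans hv
  refine ⟨fun i => ⟨(v i + 1) / 2, ?_, ?_⟩, ?_⟩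
  · linarith [(abs_le.1 (h i)).1]
  · linarith [(abs_le.1 (h i)).2]
  · ext i; simp only [uc]; ring

/-- Extension from the sphere to the ball. -/
lemma extend {X : Type*} [TopologicalSpace X] {m : ℕ} (hm : 0 < m)
    (hX : ∀ x : X, Subsingleton (HomotopyGroup (Fin m) X x))
    (φ : ℝ × (Fin m → ℝ) → X) (hφ : ContinuousOn φ {p | ‖p‖ = 1}) :
    ∃ Φ : C({p : ℝ × (Fin m → ℝ) // ‖p‖ ≤ 1}, X), ∀ p, ‖p.1‖ = 1 → Φ p = φ p.1 := by
  have hc : Continuous fun y : Fin m → I => φ (gm (uc y)) :=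
    hφ.comp_continuous (continuous_gm.comp continuous_uc) fun y => norm_gm (norm_uc_le y)
  let l : GenLoop (Fin m) X (φ (-1, 0)) := ⟨⟨_, hc⟩, fun y hy => by
    change φ (gm (uc y)) = _
    rw [gm_one (norm_uc_bd y hy)]⟩
  have hl : GenLoop.Homotopic l GenLoop.const :=
    Quotient.exact ((hX (φ (-1, 0))).elim (Quotient.mk _ l) (Quotient.mk _ GenLoop.const))
  obtain ⟨H⟩ := hl
  have hbd : ∀ t y, ‖uc y‖ = 1 → H (t, y) = φ (-1, 0) := fun t y hy => by
    rw [H.eq_fst t (norm_uc_eq y hy)]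
    exact l.2 y (norm_uc_eq y hy)
  have h0 : ∀ y, H (0, y) = φ (gm (uc y)) := fun y => H.apply_zero y
  have h1 : ∀ y, H (1, y) = φ (-1, 0) := fun y => H.apply_one y
  have nQ : ∀ q : I × (Fin m → I), ‖(1 - (q.1 : ℝ)) • gm (uc q.2)‖ = 1 - q.1 := fun q => by
    rw [norm_smul, norm_gm (norm_uc_le _), mul_one, Real.norm_of_nonneg]
    linarith [q.1.2.2]
  let Q : C(I × (Fin m → I), {p : ℝ × (Fin m → ℝ) // ‖p‖ ≤ 1}) :=
    ⟨fun q => ⟨(1 - (q.1 : ℝ)) • gm (uc q.2), by rw [nQ]; linarith [q.1.2.1]⟩, by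
      have := continuous_gm (m := m)
      have := continuous_uc (m := m)
      fun_prop⟩
  have hQs : Function.Surjective Q := by
    rintro ⟨p, hp⟩
    by_cases hp0 : p = 0
    · refine ⟨(1, fun _ => 0), Subtype.ext ?_⟩
      simp [Q, hp0]
    · have hpos := norm_pos_iff.2 hp0
      have : ‖(‖p‖⁻¹) • p‖ = 1 := by
        rw [norm_smul, norm_inv, norm_norm]; field_simp
      obtain ⟨u, hu, hup⟩ := gm_surj hm this
      obtain ⟨y, rfl⟩ := uc_surj hu
      refine ⟨(⟨1 - ‖p‖, by linarith, by linarith⟩, y), Subtype.ext ?_⟩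
      simp only [Q, ContinuousMap.coe_mk, hup, smul_smul]
      rw [sub_sub_cancel, mul_inv_cancel₀ hpos.ne', one_smul]
  have hQ : Topology.IsQuotientMap Q := .of_surjective_continuous hQs Q.continuous
  have hfib : Function.FactorsThrough H.toContinuousMap Q := by
    rintro ⟨t, y⟩ ⟨t', y'⟩ h
    have h' : (1 - (t : ℝ)) • gm (uc y) = (1 - (t' : ℝ)) • gm (uc y') := congrArg Subtype.val h
    have ht : t = t' := by
      have e := nQ (t, y)
      have e' := nQ (t', y')
      simp only at e e'
      rw [h', e'] at e
      ext; linarith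
    subst ht
    change H (t, y) = H (t, y')
    by_cases ht1 : t = 1
    · rw [ht1, h1, h1]
    have : (1 - (t : ℝ)) ≠ 0 := fun h => ht1 (Subtype.ext (show (t : ℝ) = 1 by linarith))
    rcases gm_inj (norm_uc_le y) (norm_uc_le y') (smul_right_injective _ this h') with h | ⟨h, h'⟩
    · rw [uc_inj h]
    · rw [hbd _ _ h, hbd _ _ h']
  refine ⟨hQ.lift H.toContinuousMap hfib, fun p hp => ?_⟩
  obtain ⟨u, hu, hup⟩ := gm_surj hm hp
  obtain ⟨y, rfl⟩ := uc_surj hu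
  have : p = Q (0, y) := Subtype.ext (by simp [Q, hup])
  have h2 : hQ.lift H.toContinuousMap hfib (Q (0, y)) = H (0, y) :=
    congrArg (fun f => f (0, y)) (hQ.lift_comp H.toContinuousMap hfib)
  rw [← hup, ← h0, ← h2, ← this]

noncomputable def cl (a : ℝ) : I := Set.projIcc 0 1 zero_le_one ((a + 1) / 2)

lemma continuous_cl : Continuous cl := by unfold cl; exact continuous_projIcc.comp (by fun_prop)

lemma cl_mul (t : I) : cl (2 * (t : ℝ) - 1) = t := by
  unfold cl
  rw [show (2 * (t : ℝ) - 1 + 1) / 2 = t by ring]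
  exact Set.projIcc_val _ t

lemma extend_cube {X : Type*} [TopologicalSpace X] {m : ℕ} (hm : 0 < m)
    (hX : ∀ x : X, Subsingleton (HomotopyGroup (Fin m) X x))
    (φ : I × (Fin m → I) → X)
    (hφ : ContinuousOn φ {p | p.1 = 0 ∨ p.1 = 1 ∨ p.2 ∈ Cube.boundary (Fin m)}) :
    ∃ Φ : C(I × (Fin m → I), X), ∀ p : I × (Fin m → I),
      (p.1 = 0 ∨ p.1 = 1 ∨ p.2 ∈ Cube.boundary (Fin m)) → Φ p = φ p := by
  have hcl := continuous_cl
  have huc := continuous_uc (m := m)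
  have key : ∀ p : I × (Fin m → I), ‖((2 * (p.1 : ℝ) - 1, uc p.2) : ℝ × (Fin m → ℝ))‖ = 1 ↔
      (p.1 = 0 ∨ p.1 = 1 ∨ p.2 ∈ Cube.boundary (Fin m)) := by
    intro p
    have hle : |2 * (p.1 : ℝ) - 1| ≤ 1 := by
      rw [abs_le]; constructor <;> linarith [p.1.2.1, p.1.2.2]
    rw [Prod.norm_def]
    simp only [Real.norm_eq_abs]
    constructor
    · intro h
      rcases max_choice |2 * (p.1 : ℝ) - 1| ‖uc p.2‖ with h' | h'
      · rw [h'] at h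
        rcases abs_coord.1 h with h | h
        · exact Or.inl h
        · exact Or.inr (Or.inl h)
      · rw [h'] at h
        exact Or.inr (Or.inr (norm_uc_eq _ h))
    · rw [← or_assoc]
      rintro (h | h)
      · rw [abs_coord.2 h, max_eq_left (norm_uc_le _)]
      · rw [norm_uc_bd _ h, max_eq_right hle]
  have back : ∀ p : I × (Fin m → I),
      (cl (2 * (p.1 : ℝ) - 1), fun i => cl (uc p.2 i)) = p := fun p => by
    ext1
    · exact cl_mul _
    · funext i; exact cl_mul _
  have hφ' : ContinuousOn (fun p : ℝ × (Fin m → ℝ) => φ (cl p.1, fun i => cl (p.2 i)))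
      {p | ‖p‖ = 1} := by
    refine hφ.comp (by fun_prop) ?_
    rintro ⟨a, v⟩ hp
    have hp' : ‖((a, v) : ℝ × (Fin m → ℝ))‖ = 1 := hp
    have ha : |a| ≤ 1 := hp' ▸ norm_fst_le ((a, v) : ℝ × (Fin m → ℝ))
    have hv : ‖v‖ ≤ 1 := hp' ▸ norm_snd_le ((a, v) : ℝ × (Fin m → ℝ))
    obtain ⟨y, rfl⟩ := uc_surj hv
    obtain ⟨t, rfl⟩ : ∃ t : I, 2 * (t : ℝ) - 1 = a :=
      ⟨⟨(a + 1) / 2, by linarith [(abs_le.1 ha).1], by linarith [(abs_le.1 ha).2]⟩, by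
        simp only; ring⟩
    have := (key (t, y)).1 hp'
    rw [← back (t, y)] at this
    exact this
  obtain ⟨Φ, hΦ⟩ := extend hm hX _ hφ'
  have hn : ∀ p : I × (Fin m → I), ‖((2 * (p.1 : ℝ) - 1, uc p.2) : ℝ × (Fin m → ℝ))‖ ≤ 1 := by
    intro p
    rw [Prod.norm_def]
    refine max_le ?_ (norm_uc_le _)
    rw [Real.norm_eq_abs, abs_le]; constructor <;> simp only <;> linarith [p.1.2.1, p.1.2.2]
  refine ⟨⟨fun p => Φ ⟨(2 * (p.1 : ℝ) - 1, uc p.2), hn p⟩, by fun_prop⟩, fun p hp => ?_⟩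
  have := hΦ ⟨(2 * (p.1 : ℝ) - 1, uc p.2), hn p⟩ ((key p).2 hp)
  refine this.trans ?_
  exact congrArg φ (back p)

noncomputable def ex (t : I) : Circle := Circle.exp (2 * Real.pi * t)

lemma continuous_ex : Continuous ex := by
  unfold ex; exact Circle.exp.continuous.comp (by fun_prop)

lemma ex_zero : ex 0 = 1 := by simp [ex]
lemma ex_one : ex 1 = 1 := by simp [ex]

lemma ex_surj : Function.Surjective ex := by
  intro z
  have hpi := Real.pi_pos
  obtain ⟨x, rfl⟩ := Circle.exp_surjective z
  refine ⟨⟨Int.fract (x / (2 * Real.pi)), Int.fract_nonneg _, (Int.fract_lt_one _).le⟩, ?_⟩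
  unfold ex
  rw [Circle.exp_eq_exp]
  refine ⟨-⌊x / (2 * Real.pi)⌋, ?_⟩
  simp only [Int.fract]
  push_cast
  field_simp
  ring

lemma ex_inj {s t : I} (h : ex s = ex t) : s = t ∨ ((s = 0 ∨ s = 1) ∧ (t = 0 ∨ t = 1)) := by
  have hpi := Real.pi_pos
  obtain ⟨k, hk⟩ := Circle.exp_eq_exp.1 h
  have hk' : (s : ℝ) = t + k := by
    have : (2 * Real.pi) * (s : ℝ) = (2 * Real.pi) * (t + k) := by linarith
    exact mul_left_cancel₀ (by positivity) this
  have s0 := s.2.1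
  have s1 := s.2.2
  have t0 := t.2.1
  have t1 := t.2.2
  have k1 : k ≤ 1 := by
    have : (k : ℝ) ≤ 1 := by linarith
    exact_mod_cast this
  have k0 : -1 ≤ k := by
    have : (-1 : ℝ) ≤ k := by linarith
    exact_mod_cast this
  obtain rfl | rfl | rfl : k = -1 ∨ k = 0 ∨ k = 1 := by omega
  · push_cast at hk'
    right
    exact ⟨Or.inl (Subtype.ext (show (s : ℝ) = 0 by linarith)),
      Or.inr (Subtype.ext (show (t : ℝ) = 1 by linarith))⟩
  · left; ext; simpa using hk'
  · push_cast at hk'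
    right
    exact ⟨Or.inr (Subtype.ext (show (s : ℝ) = 1 by linarith)),
      Or.inl (Subtype.ext (show (t : ℝ) = 0 by linarith))⟩

lemma main {X : Type*} [TopologicalSpace X] (h : C(Circle, X)) (n : ℕ)
    (h1 : ∀ x : X, Subsingleton (HomotopyGroup (Fin n) X x))
    (h2 : ∀ x : X, Subsingleton (HomotopyGroup (Fin (n + 1)) X x))
    (f : GenLoop (Fin n) C(Circle, X) h) : GenLoop.Homotopic f GenLoop.const := by
  classical
  have hfc : Continuous f := f.1.continuous
  have hex := continuous_ex
  -- the evaluation at `1` is nullhomotopic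
  let l : GenLoop (Fin n) X (h 1) := ⟨⟨fun y => f y 1, by fun_prop⟩, fun y hy => by
    change f y 1 = h 1
    rw [GenLoop.boundary f y hy]⟩
  have hl : GenLoop.Homotopic l GenLoop.const :=
    Quotient.exact ((h1 (h 1)).elim (Quotient.mk _ l) (Quotient.mk _ GenLoop.const))
  obtain ⟨K⟩ := hl
  have K0 : ∀ y, K (0, y) = f y 1 := fun y => K.apply_zero y
  have K1 : ∀ y, K (1, y) = h 1 := fun y => K.apply_one y
  have Kb : ∀ t y, y ∈ Cube.boundary (Fin n) → K (t, y) = h 1 := fun t y hy => by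
    rw [K.eq_fst t hy]; exact l.2 y hy
  have hfb : ∀ y, y ∈ Cube.boundary (Fin n) → f y = h := fun y hy => f.2 y hy
  have exb : ∀ s : I, (s = 0 ∨ s = 1) → ex s = 1 := by
    rintro s (rfl | rfl)
    · exact ex_zero
    · exact ex_one
  have ht : Continuous fun z : Fin (n + 1) → I => Fin.tail z := by unfold Fin.tail; fun_prop
  let φ : I × (Fin (n + 1) → I) → X := fun p =>
    if p.1 = 0 then f (Fin.tail p.2) (ex (p.2 0))
    else if p.2 0 = 0 ∨ p.2 0 = 1 then K (p.1, Fin.tail p.2)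
    else h (ex (p.2 0))
  let A : Set (I × (Fin (n + 1) → I)) := {p | p.1 = 0}
  let B : Set (I × (Fin (n + 1) → I)) := {p | p.2 0 = 0 ∨ p.2 0 = 1}
  let C : Set (I × (Fin (n + 1) → I)) := {p | p.1 = 1 ∨ Fin.tail p.2 ∈ Cube.boundary (Fin n)}
  have hA : IsClosed A := isClosed_eq (by fun_prop) (by fun_prop)
  have hB : IsClosed B :=
    (isClosed_eq (by fun_prop) (by fun_prop)).union (isClosed_eq (by fun_prop) (by fun_prop))
  have hbc : IsClosed (Cube.boundary (Fin n)) := by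
    have : Cube.boundary (Fin n) = ⋃ i, {y | y i = 0 ∨ y i = 1} := by
      ext y; simp [Cube.boundary]
    rw [this]
    exact isClosed_iUnion_of_finite fun i =>
      (isClosed_eq (by fun_prop) (by fun_prop)).union (isClosed_eq (by fun_prop) (by fun_prop))
  have hC : IsClosed C :=
    (isClosed_eq (by fun_prop) (by fun_prop)).union (hbc.preimage (by fun_prop))
  have φA : ∀ p ∈ A, φ p = f (Fin.tail p.2) (ex (p.2 0)) := fun p hp => if_pos hp
  have φB : ∀ p ∈ B, φ p = K (p.1, Fin.tail p.2) := fun p hp => by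
    by_cases h0 : p ∈ A
    · rw [φA p h0, exb _ hp, ← K0]
      rw [show p.1 = 0 from h0]
    · exact (if_neg h0).trans (if_pos hp)
  have φC : ∀ p ∈ C, φ p = h (ex (p.2 0)) := fun p hp => by
    by_cases h1 : p ∈ B
    · rw [φB p h1, exb _ h1]
      rcases hp with hp | hp
      · rw [hp, K1]
      · exact Kb _ _ hp
    by_cases h0 : p ∈ A
    · rw [φA p h0]
      rcases hp with hp | hp
      · exact absurd (hp.symm.trans h0) one_ne_zero
      · rw [hfb _ hp]
    · exact (if_neg h0).trans (if_neg h1)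
  have cA : ContinuousOn φ A := ContinuousOn.congr (by fun_prop) φA
  have cB : ContinuousOn φ B := ContinuousOn.congr (by fun_prop) φB
  have cC : ContinuousOn φ C := ContinuousOn.congr (by fun_prop) φC
  have cU := (cA.union_of_isClosed cB hA hB).union_of_isClosed cC (hA.union hB) hC
  obtain ⟨Φ, hΦ⟩ := extend_cube n.succ_pos h2 φ (cU.mono (by
    rintro p (hp | hp | ⟨i, hi⟩)
    · exact Or.inl (Or.inl hp)
    · exact Or.inr (Or.inl hp)
    · induction i using Fin.cases with
      | zero => exact Or.inl (Or.inr hi)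
      | succ i => exact Or.inr (Or.inr ⟨i, hi⟩)))
  -- descend to the circle
  let P : C((I × (Fin n → I)) × I, (I × (Fin n → I)) × Circle) :=
    ⟨fun q => (q.1, ex q.2), by fun_prop⟩
  have hP : Topology.IsQuotientMap P :=
    .of_surjective_continuous (fun q => by
      obtain ⟨s, hs⟩ := ex_surj q.2
      exact ⟨(q.1, s), by simp [P, hs]⟩) P.continuous
  let Ψ : C((I × (Fin n → I)) × I, X) :=
    ⟨fun q => Φ (q.1.1, Fin.cons q.2 q.1.2), by
      refine Φ.continuous.comp (Continuous.prodMk (by fun_prop) ?_)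
      refine continuous_pi fun i => ?_
      induction i using Fin.cases with
      | zero => simp only [Fin.cons_zero]; fun_prop
      | succ i => simp only [Fin.cons_succ]; fun_prop⟩
  have ΨA : ∀ y s, Ψ ((0, y), s) = f y (ex s) := fun y s =>
    (hΦ (0, Fin.cons s y) (Or.inl rfl)).trans (φA _ rfl)
  have ΨB : ∀ t y s, (s = 0 ∨ s = 1) → Ψ ((t, y), s) = K (t, y) := fun t y s hs =>
    (hΦ (t, Fin.cons s y) (Or.inr (Or.inr ⟨0, hs⟩))).trans (φB _ hs)
  have ΨC1 : ∀ y s, Ψ ((1, y), s) = h (ex s) := fun y s =>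
    (hΦ (1, Fin.cons s y) (Or.inr (Or.inl rfl))).trans (φC _ (Or.inl rfl))
  have ΨCb : ∀ t y s, y ∈ Cube.boundary (Fin n) → Ψ ((t, y), s) = h (ex s) := fun t y s hy =>
    (hΦ (t, Fin.cons s y) (Or.inr (Or.inr (by
      obtain ⟨i, hi⟩ := hy
      exact ⟨i.succ, hi⟩)))).trans (φC _ (Or.inr hy))
  have hfac : Function.FactorsThrough Ψ P := by
    rintro ⟨⟨t, y⟩, s⟩ ⟨⟨t', y'⟩, s'⟩ hh
    have e1 : (t, y) = (t', y') := congrArg Prod.fst hh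
    have e2 : ex s = ex s' := congrArg Prod.snd hh
    obtain ⟨rfl, rfl⟩ := Prod.mk.inj e1
    rcases ex_inj e2 with rfl | ⟨hs, hs'⟩
    · rfl
    · rw [ΨB _ _ _ hs, ΨB _ _ _ hs']
  let G : C((I × (Fin n → I)) × Circle, X) := hP.lift Ψ hfac
  have hG : ∀ q s, G (q, ex s) = Ψ (q, s) := fun q s =>
    congrArg (fun g => g (q, s)) (hP.lift_comp Ψ hfac)
  refine ⟨⟨⟨G.curry, fun y => ?_, fun y => ?_⟩, fun t y hy => ?_⟩⟩
  · ext z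
    obtain ⟨s, rfl⟩ := ex_surj z
    exact (hG _ _).trans (ΨA y s)
  · ext z
    obtain ⟨s, rfl⟩ := ex_surj z
    exact (hG _ _).trans (ΨC1 y s)
  · ext z
    obtain ⟨s, rfl⟩ := ex_surj z
    refine ((hG _ _).trans (ΨCb t y s hy)).trans ?_
    exact (congrArg (fun g : C(Circle, X) => g (ex s)) (hfb y hy)).symm

end FreeLoopAux

/-- The free loop space of an aspherical space is aspherical: if all homotopy groups
`π_n X x` with `n ≥ 2` are trivial, then so are all `π_n C(Circle, X) h` with `n ≥ 2`. -/
theorem freeLoopSpace_aspherical {X : Type*} [TopologicalSpace X]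
    (hX : ∀ n : ℕ, 2 ≤ n → ∀ x : X, Subsingleton (HomotopyGroup (Fin n) X x))
    (h : C(Circle, X)) (n : ℕ) (hn : 2 ≤ n) :
    Subsingleton (HomotopyGroup (Fin n) C(Circle, X) h) := by
  refine ⟨?_⟩
  rintro ⟨f⟩ ⟨g⟩
  have hf := FreeLoopAux.main h n (hX n hn) (hX (n + 1) (by omega)) f
  have hg := FreeLoopAux.main h n (hX n hn) (hX (n + 1) (by omega)) g
  exact Quotient.sound (hf.trans hg.symm)
end
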